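/- For every length-m nonincreasing scoring vector α over the rationals, there exists a unique normalized nonincreasing scoring vector β over the naturals such that α and β yield the same winner set on every multiset of votes over m candidates. -/

import Mathlib

/-- Score of candidate c under rational scoring vector α for the multiset of votes V. -/
def score {m : ℕ} (α : Fin m → ℚ) (V : Multiset (Equiv.Perm (Fin m))) (c : Fin m) : ℚ :=
  (V.map fun v => α (v.symm c)).sum

/-- Winners: candidates with maximal total score. -/
def winners {m : ℕ} (α : Fin m → ℚ) (V : Multiset (Equiv.Perm (Fin m))) : Set (Fin m) :=
  {c | ∀ d, score α V d ≤ score α V c}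

theorem score_add' {m : ℕ} (α : Fin m → ℚ) (V W : Multiset (Equiv.Perm (Fin m))) (c : Fin m) :
    score α (V + W) c = score α V c + score α W c := by
  simp [score]

theorem score_nsmul' {m : ℕ} (α : Fin m → ℚ) (k : ℕ) (V : Multiset (Equiv.Perm (Fin m)))
    (c : Fin m) : score α (k • V) c = k * score α V c := by
  simp [score, Multiset.map_nsmul, Multiset.sum_nsmul]

theorem score_single' {m : ℕ} (α : Fin m → ℚ) (v : Equiv.Perm (Fin m)) (c : Fin m) :
    score α {v} c = α (v.symm c) := by
  simp [score]

theorem score_affine {m : ℕ} (α : Fin m → ℚ) (s t : ℚ) (V : Multiset (Equiv.Perm (Fin m)))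
    (c : Fin m) :
    score (fun i => s * (α i - t)) V c = s * score α V c - s * t * (Multiset.card V : ℚ) := by
  induction V using Multiset.induction_on with
  | empty => simp [score]
  | cons v V ih =>
    simp only [score, Multiset.map_cons, Multiset.sum_cons, Multiset.card_cons] at ih ⊢
    rw [ih]; push_cast; ring

theorem winners_affine {m : ℕ} (α : Fin m → ℚ) (s t : ℚ) (hs : 0 < s)
    (V : Multiset (Equiv.Perm (Fin m))) :
    winners α V = winners (fun i => s * (α i - t)) V := by
  ext c
  simp only [winners, Set.mem_setOf_eq, score_affine]
  refine forall_congr' fun d => ?_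
  rw [sub_le_sub_iff_right, mul_le_mul_iff_right₀ hs]

/-- A profile in which `a` and `b` tie and beat everybody else by a fixed margin. -/
theorem exists_base {m : ℕ} (γ : Fin m → ℚ) (Z L a b : Fin m) (hab : a ≠ b)
    (hZ : ∀ i, γ i ≤ γ Z) (hL : γ L < γ Z) :
    ∃ (U : Multiset (Equiv.Perm (Fin m))) (g : ℚ), 0 < g ∧ (∀ δ : Fin m → ℚ, score δ U a = score δ U b) ∧
      ∀ c, c ≠ a → c ≠ b → score γ U c + g ≤ score γ U a := by
  classical
  have hZL : Z ≠ L := by rintro rfl; exact lt_irrefl _ hL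
  let F : Fin m → Finset (Equiv.Perm (Fin m)) := fun x => Finset.univ.filter fun v => v Z = x
  have hsc : ∀ (δ : Fin m → ℚ) x c, score δ (F x).val c = ∑ v ∈ F x, δ (v.symm c) :=
    fun δ x c => rfl
  have heq : ∀ (δ : Fin m → ℚ) (x c y d : Fin m) (π : Equiv.Perm (Fin m)), π x = y → π c = d →
      score δ (F x).val c = score δ (F y).val d := by
    intro δ x c y d π h1 h2
    rw [hsc, hsc]
    refine Finset.sum_equiv (Equiv.mulLeft π) ?_ ?_
    · intro v
      simp [F, ← h1]
    · intro v _
      have : (π * v).symm d = v.symm c := by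
        rw [Equiv.symm_apply_eq]; simp [h2]
      simp [this]
  have hlt : score γ (F a).val b < score γ (F a).val a := by
    rw [hsc, hsc]
    have hsym : ∀ v ∈ F a, v.symm a = Z := by
      intro v hv
      simp only [F, Finset.mem_filter, Finset.mem_univ, true_and] at hv
      rw [Equiv.symm_apply_eq, hv]
    apply Finset.sum_lt_sum
    · intro v hv
      rw [hsym v hv]; exact hZ _
    · obtain ⟨v, h1, h2⟩ : ∃ v : Equiv.Perm (Fin m), v Z = a ∧ v L = b := by
        refine ⟨Equiv.swap (Equiv.swap Z a L) b * Equiv.swap Z a, ?_, by simp⟩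
        simp only [Equiv.Perm.mul_apply, Equiv.swap_apply_left]
        apply Equiv.swap_apply_of_ne_of_ne _ hab
        intro h
        have h3 : Equiv.swap Z a Z = Equiv.swap Z a L := by rw [Equiv.swap_apply_left]; exact h
        exact hZL ((Equiv.swap Z a).injective h3)
      have hv : v ∈ F a := by simp [F, h1]
      refine ⟨v, hv, ?_⟩
      rw [hsym v hv, show v.symm b = L by rw [Equiv.symm_apply_eq, h2]]
      exact hL
  have e1 : ∀ δ : Fin m → ℚ, score δ (F a).val a = score δ (F b).val b :=
    fun δ => heq δ a a b b (Equiv.swap a b) (by simp) (by simp)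
  have e2 : ∀ δ : Fin m → ℚ, score δ (F a).val b = score δ (F b).val a :=
    fun δ => heq δ a b b a (Equiv.swap a b) (by simp) (by simp)
  refine ⟨(F a).val + (F b).val, score γ (F a).val a - score γ (F a).val b, by linarith, ?_, ?_⟩
  · intro δ
    rw [score_add', score_add']; linarith [e1 δ, e2 δ]
  · intro c hca hcb
    have e3 : score γ (F a).val b = score γ (F a).val c :=
      heq γ a b a c (Equiv.swap b c) (Equiv.swap_apply_of_ne_of_ne hab hca.symm) (by simp)
    have e4 : score γ (F b).val a = score γ (F b).val c :=
      heq γ b a b c (Equiv.swap a c) (Equiv.swap_apply_of_ne_of_ne hab.symm hcb.symm) (by simp)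
    rw [score_add', score_add']; linarith [e1 γ, e2 γ]

theorem prop_of_winners {m : ℕ} (β γ : Fin m → ℕ) (Z L : Fin m)
    (hZ : ∀ i, γ i ≤ γ Z) (hbL : β L = 0) (hgL : γ L = 0) (hpos : 0 < γ Z)
    (hw : ∀ V, winners (fun i => (γ i : ℚ)) V = winners (fun i => (β i : ℚ)) V) (i : Fin m) :
    γ Z * β i = β Z * γ i := by
  have hZL : Z ≠ L := by rintro rfl; omega
  by_cases hi : i = L
  · subst hi; simp [hbL, hgL]
  obtain ⟨U, g, hg, hU, hUc⟩ := exists_base (fun i => (γ i : ℚ)) Z L Z L hZL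
    (fun i => by exact_mod_cast hZ i) (by simp only [hgL]; exact_mod_cast hpos)
  let W : Multiset (Equiv.Perm (Fin m)) :=
    (γ Z) • {Equiv.swap Z i} + (γ i) • {Equiv.swap Z L}
  have hWZ : ∀ δ : Fin m → ℚ, score δ W Z = γ Z * δ i + γ i * δ L := by
    intro δ
    simp [W, score_add', score_nsmul', score_single']
  have hWL : ∀ δ : Fin m → ℚ, score δ W L = γ Z * δ L + γ i * δ Z := by
    intro δ
    simp [W, score_add', score_nsmul', score_single',
      Equiv.swap_apply_of_ne_of_ne hZL.symm (Ne.symm hi)]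
  have hWc : ∀ c, score (fun i => (γ i : ℚ)) W c ≤ γ Z * γ Z + γ i * γ Z := by
    intro c
    simp only [W, score_add', score_nsmul', score_single']
    gcongr <;> exact hZ _
  clear_value W
  obtain ⟨K, hK⟩ := Archimedean.arch ((γ Z * γ Z + γ i * γ Z : ℚ)) hg
  rw [nsmul_eq_mul] at hK
  have hKpos : (0 : ℚ) ≤ K := Nat.cast_nonneg K
  have hWZ0 := hWZ (fun i => (γ i : ℚ))
  have hWL0 := hWL (fun i => (γ i : ℚ))
  simp only [hgL, Nat.cast_zero, mul_zero, add_zero, zero_add] at hWZ0 hWL0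
  have tie : score (fun i => (γ i : ℚ)) (K • U + W) Z = score (fun i => (γ i : ℚ)) (K • U + W) L := by
    rw [score_add', score_add', score_nsmul', score_nsmul', hU, hWZ0, hWL0]; ring
  have hmemZ : Z ∈ winners (fun i => (γ i : ℚ)) (K • U + W) := by
    intro d
    by_cases h1 : d = Z
    · rw [h1]
    by_cases h2 : d = L
    · rw [h2, tie]
    have h3 := mul_le_mul_of_nonneg_left (hUc d h1 h2) hKpos
    have h4 := hWc d
    have h5 : (0 : ℚ) ≤ γ Z * γ i := by positivity
    rw [score_add', score_add', score_nsmul', score_nsmul', hWZ0]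
    linarith
  have hmemL : L ∈ winners (fun i => (γ i : ℚ)) (K • U + W) := by
    intro d
    rw [← tie]; exact hmemZ d
  have hUU : score (fun i => (β i : ℚ)) (K • U + W) Z
      = score (fun i => (β i : ℚ)) (K • U + W) L := by
    rw [hw] at hmemZ hmemL
    exact le_antisymm (hmemL Z) (hmemZ L)
  rw [score_add', score_add', score_nsmul', score_nsmul', hU, hWZ, hWL] at hUU
  simp only [hbL, Nat.cast_zero, mul_zero, add_zero, zero_add] at hUU
  have h6 : (γ Z : ℚ) * β i = γ i * β Z := by linarith
  have h7 : γ Z * β i = γ i * β Z := by exact_mod_cast h6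
  rw [h7, mul_comm]

theorem zero_of_winners {m : ℕ} (β γ : Fin m → ℕ) (Z L : Fin m)
    (hbL : β L = 0) (hg : ∀ i, γ i = 0)
    (hw : ∀ V, winners (fun i => (γ i : ℚ)) V = winners (fun i => (β i : ℚ)) V) :
    β Z = 0 := by
  have h : L ∈ winners (fun i => (γ i : ℚ)) {1} := by
    intro d
    simp [score_single', hg]
  rw [hw] at h
  have h2 := h Z
  simp only [score_single', Equiv.Perm.one_symm, Equiv.Perm.one_apply, hbL] at h2
  have h3 : β Z ≤ 0 := by exact_mod_cast h2
  omega

theorem unique_norm {m : ℕ} (β γ : Fin m → ℕ) (Z L : Fin m)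
    (hbZ : ∀ i, β i ≤ β Z) (hgZ : ∀ i, γ i ≤ γ Z) (hbL : β L = 0) (hgL : γ L = 0)
    (hb : Finset.univ.gcd β = 1 ∨ ∀ i, β i = 0) (hg : Finset.univ.gcd γ = 1 ∨ ∀ i, γ i = 0)
    (hw : ∀ V, winners (fun i => (γ i : ℚ)) V = winners (fun i => (β i : ℚ)) V) :
    β = γ := by
  by_cases hg0 : γ Z = 0
  · have h1 : ∀ i, γ i = 0 := fun i => by have := hgZ i; omega
    have h2 := zero_of_winners β γ Z L hbL h1 hw
    funext i
    have := hbZ i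
    have := h1 i
    omega
  by_cases hb0 : β Z = 0
  · have h1 : ∀ i, β i = 0 := fun i => by have := hbZ i; omega
    exact absurd (zero_of_winners γ β Z L hgL h1 (fun V => (hw V).symm)) hg0
  have hb1 := hb.resolve_right (fun h => hb0 (h Z))
  have hg1 := hg.resolve_right (fun h => hg0 (h Z))
  have hp := prop_of_winners β γ Z L hgZ hbL hgL (Nat.pos_of_ne_zero hg0) hw
  have h1 : Finset.univ.gcd (fun i => γ Z * β i) = Finset.univ.gcd (fun i => β Z * γ i) :=
    congrArg _ (funext hp)
  rw [Finset.gcd_mul_left, Finset.gcd_mul_left] at h1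
  simp only [hb1, hg1, normalize_eq, mul_one] at h1
  funext i
  have h2 := hp i
  rw [h1] at h2
  exact Nat.eq_of_mul_eq_mul_left (Nat.pos_of_ne_zero hb0) h2

theorem exists_nat_affine {m : ℕ} (α : Fin m → ℚ) (L : Fin m) (hL : ∀ i, α L ≤ α i) :
    ∃ (s : ℚ) (n : Fin m → ℕ), 0 < s ∧ ∀ i, (n i : ℚ) = s * (α i - α L) := by
  let D : ℕ := ∏ i, (α i - α L).den
  have hD : 0 < D := Finset.prod_pos fun i _ => Rat.den_pos _
  have h : ∀ i, ∃ k : ℕ, (k : ℚ) = D * (α i - α L) := by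
    intro i
    obtain ⟨e, he⟩ : (α i - α L).den ∣ D := Finset.dvd_prod_of_mem _ (Finset.mem_univ i)
    have h0 : 0 ≤ (α i - α L).num := Rat.num_nonneg.2 (sub_nonneg.2 (hL i))
    refine ⟨e * (α i - α L).num.toNat, ?_⟩
    have h1 : (((α i - α L).num.toNat : ℕ) : ℚ) = ((α i - α L).num : ℚ) := by
      exact_mod_cast congrArg (Int.cast : ℤ → ℚ) (Int.toNat_of_nonneg h0)
    rw [he]
    push_cast
    rw [h1]
    have h2 := Rat.den_mul_eq_num (α i - α L)
    rw [← h2]; ring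
  choose n hn using h
  exact ⟨D, n, by exact_mod_cast hD, hn⟩

theorem exists_norm_affine {m : ℕ} (α : Fin m → ℚ) (L : Fin m) (hL : ∀ i, α L ≤ α i) :
    ∃ (s : ℚ) (n : Fin m → ℕ), 0 < s ∧ (∀ i, (n i : ℚ) = s * (α i - α L)) ∧
      (Finset.univ.gcd n = 1 ∨ ∀ i, n i = 0) := by
  obtain ⟨s, n, hs, hn⟩ := exists_nat_affine α L hL
  by_cases h0 : ∀ i, n i = 0
  · exact ⟨s, n, hs, hn, Or.inr h0⟩
  push Not at h0
  obtain ⟨j, hj⟩ := h0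
  obtain ⟨k, hk, hk1⟩ := Finset.extract_gcd n ⟨j, Finset.mem_univ j⟩
  have hG : 0 < Finset.univ.gcd n := by
    apply Nat.pos_of_ne_zero
    intro h
    exact hj (Finset.gcd_eq_zero_iff.1 h j (Finset.mem_univ j))
  have hG' : (0 : ℚ) < ((Finset.univ.gcd n : ℕ) : ℚ) := by exact_mod_cast hG
  refine ⟨s / (Finset.univ.gcd n : ℕ), k, by positivity, ?_, Or.inl hk1⟩
  intro i
  have h1 := hn i
  rw [hk i (Finset.mem_univ i)] at h1
  push_cast at h1
  rw [div_mul_eq_mul_div, ← h1]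
  field_simp

/-- Every rational nonincreasing scoring vector has exactly one normalized natural
nonincreasing scoring vector yielding the same winner set on every multiset of votes. -/
theorem stmt_3 (m : ℕ) (hm : 1 ≤ m) (α : Fin m → ℚ) (hα : Antitone α) :
    ∃! β : Fin m → ℕ,
      Antitone β ∧
      β ⟨m - 1, by omega⟩ = 0 ∧
      (Finset.univ.gcd β = 1 ∨ ∀ i, β i = 0) ∧
      ∀ V : Multiset (Equiv.Perm (Fin m)),
        winners α V = winners (fun i => (β i : ℚ)) V := by
  have hLast : ∀ i : Fin m, i ≤ ⟨m - 1, by omega⟩ := fun i => by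
    rw [Fin.le_def]; have := i.2; simp only; omega
  have hFirst : ∀ i : Fin m, (⟨0, by omega⟩ : Fin m) ≤ i := fun i => by
    rw [Fin.le_def]; exact Nat.zero_le _
  obtain ⟨s, n, hs, hn, hg⟩ := exists_norm_affine α ⟨m - 1, by omega⟩ (fun i => hα (hLast i))
  have hn0 : n ⟨m - 1, by omega⟩ = 0 := by
    have := hn ⟨m - 1, by omega⟩
    rw [sub_self, mul_zero] at this
    exact_mod_cast this
  have hna : Antitone n := by
    intro i j hij
    have h : (n j : ℚ) ≤ n i := by
      rw [hn, hn]
      exact mul_le_mul_of_nonneg_left (sub_le_sub_right (hα hij) _) hs.le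
    exact_mod_cast h
  have hnw : ∀ V, winners α V = winners (fun i => (n i : ℚ)) V := by
    intro V
    rw [funext hn]
    exact winners_affine α s _ hs V
  refine ⟨n, ⟨hna, hn0, hg, hnw⟩, ?_⟩
  rintro γ ⟨ha, h0, hgc, hw⟩
  exact unique_norm γ n ⟨0, by omega⟩ ⟨m - 1, by omega⟩ (fun i => ha (hFirst i))
    (fun i => hna (hFirst i)) h0 hn0 hgc hg (fun V => (hnw V).symm.trans (hw V))
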